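/- Let v_1, …, v_m ∈ ℤ^n be pairwise distinct primitive vectors spanning ℝ^n and λ_1, …, λ_m ∈ ℝ, with l_j(u) = ⟨u, v_j⟩ − λ_j. Let u ∈ ℝ^n and let w ∈ ℤ^n be such that J_w = {j : ⟨w, v_j⟩ ≠ 0} is nonempty and the minimum of {l_j(u) : j ∈ J_w} is attained by exactly one index in J_w (i.e., u ∉ Trop(P, w)). Then there exists a primitive lattice vector w̃ ∈ ℤ^n that is orthogonal to some (n−1)-dimensional linear subspace of ℝ^n spanned by a subset of {v_1, …, v_m}, such that J_{w̃} is nonempty and the minimum of {l_j(u) : j ∈ J_{w̃}} is attained by exactly one index in J_{w̃} (i.e., u ∉ Trop(P, w̃)). -/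

import Mathlib

open scoped Classical

noncomputable section

/-- Integer inner product `⟨w, v⟩ = ∑ i, w i * v i` on `ℤ^n`. -/
def zdot {n : ℕ} (w v : Fin n → ℤ) : ℤ := ∑ i, w i * v i

/-- A lattice vector is primitive if the gcd of its entries is `1`. -/
def Primitive {n : ℕ} (w : Fin n → ℤ) : Prop := Finset.univ.gcd w = 1

/-- The affine function `l_j(u) = ⟨u, v_j⟩ - λ_j`. -/
def lf {n m : ℕ} (v : Fin m → Fin n → ℤ) (lam : Fin m → ℝ) (j : Fin m) (u : Fin n → ℝ) : ℝ :=
  (∑ i, u i * (v j i : ℝ)) - lam j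

/-- The polytope `P = {u : l_j(u) ≥ 0 for all j}`. -/
def Pset {n m : ℕ} (v : Fin m → Fin n → ℤ) (lam : Fin m → ℝ) : Set (Fin n → ℝ) :=
  {u | ∀ j, 0 ≤ lf v lam j u}

/-- The tropicalization of `P` relative to the lattice vector `w`: the set of points at which
the minimum of `{l_j(u) : ⟨w, v_j⟩ ≠ 0}` is attained by at least two distinct indices. -/
def TropRel {n m : ℕ} (v : Fin m → Fin n → ℤ) (lam : Fin m → ℝ) (w : Fin n → ℤ) :
    Set (Fin n → ℝ) :=
  {u | ∃ j₁ j₂ : Fin m, j₁ ≠ j₂ ∧ zdot w (v j₁) ≠ 0 ∧ zdot w (v j₂) ≠ 0 ∧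
        lf v lam j₁ u = lf v lam j₂ u ∧
        ∀ j : Fin m, zdot w (v j) ≠ 0 → lf v lam j₁ u ≤ lf v lam j u}

/-- A primary subspace for `P`: an `(n-1)`-dimensional subspace of `ℝ^n` spanned by a subset
of the facet normal vectors `v_j`. -/
def IsPrimary {n m : ℕ} (v : Fin m → Fin n → ℤ) (V : Submodule ℝ (Fin n → ℝ)) : Prop :=
  Module.finrank ℝ ↥V = n - 1 ∧
  ∃ S : Set (Fin m), V = Submodule.span ℝ ((fun j => fun i => ((v j i : ℝ))) '' S)

/-- `w` is orthogonal to some primary subspace for `P`. -/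
def OrthToPrimary {n m : ℕ} (v : Fin m → Fin n → ℤ) (w : Fin n → ℤ) : Prop :=
  ∃ V : Submodule ℝ (Fin n → ℝ), IsPrimary v V ∧ ∀ x ∈ V, (∑ i, (w i : ℝ) * x i) = 0

/-- Dot product with a fixed integer vector, as a linear functional. -/
def dotLin (K : Type) [Field K] {n : ℕ} (w : Fin n → ℤ) : (Fin n → K) →ₗ[K] K :=
  ∑ i, (w i : K) • LinearMap.proj i

lemma dotLin_apply (K : Type) [Field K] {n : ℕ} (w : Fin n → ℤ) (x : Fin n → K) :
    dotLin K w x = ∑ i, (w i : K) * x i := by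
  simp [dotLin]

lemma dotLin_cast (K : Type) [Field K] {n : ℕ} (w v : Fin n → ℤ) :
    dotLin K w (fun i => (v i : K)) = (zdot w v : K) := by
  simp [dotLin_apply, zdot]

/-- A rational functional is a positive multiple of a primitive integral one. -/
lemma exists_primitive {n : ℕ} (hn : 1 ≤ n) (f : (Fin n → ℚ) →ₗ[ℚ] ℚ) :
    ∃ wt : Fin n → ℤ, Primitive wt ∧ ∀ x : Fin n → ℤ,
      (zdot wt x = 0 → f (fun i => (x i : ℚ)) = 0) ∧
      (f ≠ 0 → f (fun i => (x i : ℚ)) = 0 → zdot wt x = 0) := by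
  have hf : ∀ x : Fin n → ℚ, f x = ∑ i, x i * f (Pi.single i 1) := by
    intro x
    conv_lhs => rw [pi_eq_sum_univ' x]
    rw [map_sum]
    refine Finset.sum_congr rfl fun i _ => ?_
    rw [map_smul, smul_eq_mul]
  obtain ⟨b, hb⟩ := IsLocalization.exist_integer_multiples_of_finite
    (nonZeroDivisors ℤ) (fun i : Fin n => f (Pi.single i 1))
  choose w hw using hb
  have hb0 : ((b : ℤ) : ℚ) ≠ 0 := by
    exact_mod_cast nonZeroDivisors.coe_ne_zero b
  have hne : (Finset.univ : Finset (Fin n)).Nonempty := ⟨⟨0, hn⟩, Finset.mem_univ _⟩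
  obtain ⟨g, hg, hg1⟩ := Finset.extract_gcd w hne
  refine ⟨g, hg1, fun x => ?_⟩
  have key : ((b : ℤ) : ℚ) * f (fun i => (x i : ℚ))
      = ((Finset.univ.gcd w : ℤ) : ℚ) * (zdot g x : ℚ) := by
    rw [hf, Finset.mul_sum, zdot, Int.cast_sum, Finset.mul_sum]
    refine Finset.sum_congr rfl fun i _ => ?_
    have h1 : ((w i : ℤ) : ℚ) = ((b : ℤ) : ℚ) * f (Pi.single i 1) := by
      simpa using hw i
    have h2 : ((w i : ℤ) : ℚ) = ((Finset.univ.gcd w : ℤ) : ℚ) * (g i : ℚ) := by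
      exact_mod_cast hg i (Finset.mem_univ _)
    push_cast
    linear_combination (x i : ℚ) * (h2 - h1)
  constructor
  · intro h
    rw [h] at key
    simpa [hb0] using key
  · intro hf0 h
    rw [h, mul_zero] at key
    rcases mul_eq_zero.1 key.symm with h0 | h0
    · exfalso
      apply hf0
      have hz : Finset.univ.gcd w = 0 := by exact_mod_cast h0
      have hw0 := Finset.gcd_eq_zero_iff.1 hz
      ext1 i
      have h1 : ((w i : ℤ) : ℚ) = ((b : ℤ) : ℚ) * f (Pi.single i 1) := by
        simpa using hw i
      rw [hw0 i (Finset.mem_univ _)] at h1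
      ext
      simpa [hb0] using h1.symm
    · exact_mod_cast h0

/-- Coordinatewise cast from rational to real vectors. -/
def castLin (n : ℕ) : (Fin n → ℚ) →ₗ[ℚ] (Fin n → ℝ) where
  toFun x := fun i => (x i : ℝ)
  map_add' x y := by ext i; simp
  map_smul' c x := by ext i; simp [Rat.smul_def]

/-- If `u ∉ Trop(P, w)` for some lattice vector `w` with `J_w ≠ ∅` (i.e. the
minimum of `{l_j(u) : j ∈ J_w}` is attained by exactly one index), then there is a primitive
lattice vector `w̃` orthogonal to an `(n-1)`-dimensional subspace spanned by facet normal
vectors such that `J_{w̃} ≠ ∅` and `u ∉ Trop(P, w̃)`. -/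
theorem statement3 {n m : ℕ} (hn : 1 ≤ n) (hm : 1 ≤ m)
    (v : Fin m → Fin n → ℤ) (lam : Fin m → ℝ)
    (hdist : Function.Injective v)
    (hprim : ∀ j, Primitive (v j))
    (hspan : Submodule.span ℝ (Set.range fun j => fun i => ((v j i : ℝ)))
      = (⊤ : Submodule ℝ (Fin n → ℝ)))
    (u : Fin n → ℝ) (w : Fin n → ℤ)
    (j₀ : Fin m) (hj₀ : zdot w (v j₀) ≠ 0)
    (hmin : ∀ j, zdot w (v j) ≠ 0 → lf v lam j₀ u ≤ lf v lam j u)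
    (huniq : ∀ j, zdot w (v j) ≠ 0 → lf v lam j u = lf v lam j₀ u → j = j₀) :
    ∃ wt : Fin n → ℤ, Primitive wt ∧ OrthToPrimary v wt ∧
      ∃ k₀ : Fin m, zdot wt (v k₀) ≠ 0 ∧
        (∀ j, zdot wt (v j) ≠ 0 → lf v lam k₀ u ≤ lf v lam j u) ∧
        ∀ j, zdot wt (v j) ≠ 0 → lf v lam j u = lf v lam k₀ u → j = k₀ := by
  let q : Fin m → Fin n → ℚ := fun j i => (v j i : ℚ)
  let r : Fin m → Fin n → ℝ := fun j i => (v j i : ℝ)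
  let A : Set (Fin m) := {j | zdot w (v j) = 0}
  have hA : q j₀ ∉ Submodule.span ℚ (q '' A) := by
    intro h
    have hle : Submodule.span ℚ (q '' A) ≤ LinearMap.ker (dotLin ℚ w) := by
      rw [Submodule.span_le]
      rintro _ ⟨j, hj, rfl⟩
      have hj' : zdot w (v j) = 0 := hj
      have := dotLin_cast ℚ w (v j)
      rw [hj'] at this
      simpa using this
    have h1 := hle h
    rw [LinearMap.mem_ker] at h1
    have h2 := dotLin_cast ℚ w (v j₀)
    have h3 : ((zdot w (v j₀) : ℤ) : ℚ) = 0 := h2.symm.trans h1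
    exact hj₀ (by exact_mod_cast h3)
  obtain ⟨S, hAS, hS⟩ := Finite.exists_le_maximal
    (p := fun S : Set (Fin m) => q j₀ ∉ Submodule.span ℚ (q '' S)) hA
  have hSn : q j₀ ∉ Submodule.span ℚ (q '' S) := hS.prop
  obtain ⟨f, hf0, hfS⟩ := Submodule.exists_le_ker_of_notMem hSn
  have hfne : f ≠ 0 := by rintro rfl; simp at hf0
  obtain ⟨wt, hwt, hz⟩ := exists_primitive hn f
  have hzS : ∀ j ∈ S, zdot wt (v j) = 0 := fun j hj =>
    (hz (v j)).2 hfne (hfS (Submodule.subset_span ⟨j, hj, rfl⟩))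
  have hz0 : zdot wt (v j₀) ≠ 0 := fun h => hf0 ((hz (v j₀)).1 h)
  let V : Submodule ℝ (Fin n → ℝ) := Submodule.span ℝ (r '' S)
  have hVker : V ≤ LinearMap.ker (dotLin ℝ wt) := by
    refine Submodule.span_le.2 ?_
    rintro _ ⟨j, hj, rfl⟩
    have := dotLin_cast ℝ wt (v j)
    rw [hzS j hj] at this
    simpa using this
  have h0V : r j₀ ∉ V := by
    intro h
    have h1 := hVker h
    rw [LinearMap.mem_ker] at h1
    have h3 : ((zdot wt (v j₀) : ℤ) : ℝ) = 0 := (dotLin_cast ℝ wt (v j₀)).symm.trans h1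
    exact hz0 (by exact_mod_cast h3)
  have hcast : ∀ j, castLin n (q j) = r j := by
    intro j; ext i; simp [castLin, q, r]
  have hcV : ∀ x ∈ Submodule.span ℚ (q '' S), castLin n x ∈ V := by
    intro x hx
    have hle : Submodule.span ℚ (q '' S) ≤ (V.restrictScalars ℚ).comap (castLin n) := by
      rw [Submodule.span_le]
      rintro _ ⟨j, hj, rfl⟩
      change castLin n (q j) ∈ V
      rw [hcast]
      exact Submodule.subset_span ⟨j, hj, rfl⟩
    exact hle hx
  have htop : V ⊔ Submodule.span ℝ {r j₀} = ⊤ := by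
    rw [eq_top_iff, ← hspan, Submodule.span_le]
    rintro _ ⟨j, rfl⟩
    change r j ∈ V ⊔ Submodule.span ℝ {r j₀}
    by_cases hj : j ∈ S
    · exact Submodule.mem_sup_left (Submodule.subset_span ⟨j, hj, rfl⟩)
    have hmem : q j₀ ∈ Submodule.span ℚ (q '' (insert j S)) := by
      by_contra hcon
      exact hj (hS.le_of_ge hcon (Set.subset_insert j S) (Set.mem_insert j S))
    rw [Set.image_insert_eq, Submodule.mem_span_insert] at hmem
    obtain ⟨a, z, hzm, haz⟩ := hmem
    have ha : a ≠ 0 := by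
      rintro rfl
      apply hSn
      rw [haz]
      simpa using hzm
    have hr : r j = ((a : ℝ)⁻¹) • (r j₀ - castLin n z) := by
      have h1 : castLin n (q j₀) = castLin n (a • q j + z) := by rw [haz]
      rw [map_add, map_smul, hcast, hcast] at h1
      have ha' : (a : ℝ) ≠ 0 := by exact_mod_cast ha
      rw [h1, add_sub_cancel_right]
      ext i
      simp [Rat.smul_def, ha']
    rw [hr]
    exact Submodule.smul_mem _ _ (Submodule.sub_mem _
      (Submodule.mem_sup_right (Submodule.mem_span_singleton_self _))
      (Submodule.mem_sup_left (hcV z hzm)))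
  have hdim : Module.finrank ℝ V = n - 1 := by
    have h1 := Submodule.finrank_add_le_finrank_add_finrank V (Submodule.span ℝ {r j₀})
    rw [htop, finrank_top, Module.finrank_fin_fun] at h1
    have h2 : Module.finrank ℝ (Submodule.span ℝ {r j₀}) ≤ 1 := by
      simpa using finrank_span_le_card (R := ℝ) ({r j₀} : Set (Fin n → ℝ))
    have h3 : Module.finrank ℝ V < n := by
      have := Submodule.finrank_lt (s := V) (fun h => h0V (by rw [h]; trivial))
      simpa using this
    omega
  refine ⟨wt, hwt, ⟨V, ⟨hdim, S, rfl⟩, ?_⟩, j₀, hz0, ?_, ?_⟩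
  · intro x hx
    rw [← dotLin_apply]
    exact hVker hx
  · intro j hj
    exact hmin j fun h => hj (hzS j (hAS h))
  · intro j hj
    exact huniq j fun h => hj (hzS j (hAS h))
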